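/- Let B be the subalgebra of U_q(sl3) generated by K^{±1} = (K_1 K_2^{-1})^{±1}, B_1 = F_1 - c_1 E_2 K_1^{-1}, and B_2 = F_2 - c_2 E_1 K_2^{-1}, for nonzero scalars c_1, c_2. Then the quantum Serre-type relation B_1^2 B_2 - (q+q^{-1}) B_1 B_2 B_1 + B_2 B_1^2 = (q+q^{-1})(q c_2 K + q^{-2} c_1 K^{-1}) B_1 holds in U_q(sl3). -/

import Mathlib

noncomputable section

/-- The defining relations of `U_q(sl3)` inside a `ℂ`-algebra `R`, with real `q`. -/
structure UqSL3 (R : Type*) [Ring R] [Algebra ℂ R] (q : ℝ)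
    (E₁ E₂ F₁ F₂ K₁ K₁' K₂ K₂' : R) : Prop where
  K₁mul : K₁ * K₁' = 1
  K₁mul' : K₁' * K₁ = 1
  K₂mul : K₂ * K₂' = 1
  K₂mul' : K₂' * K₂ = 1
  Kcomm : K₁ * K₂ = K₂ * K₁
  Kcomm' : K₁ * K₂' = K₂' * K₁
  Kcomm'' : K₁' * K₂ = K₂ * K₁'
  KE11 : K₁ * E₁ = ((q:ℂ) ^ (2:ℤ)) • (E₁ * K₁)
  KE12 : K₁ * E₂ = ((q:ℂ) ^ (-1:ℤ)) • (E₂ * K₁)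
  KE21 : K₂ * E₁ = ((q:ℂ) ^ (-1:ℤ)) • (E₁ * K₂)
  KE22 : K₂ * E₂ = ((q:ℂ) ^ (2:ℤ)) • (E₂ * K₂)
  KF11 : K₁ * F₁ = ((q:ℂ) ^ (-2:ℤ)) • (F₁ * K₁)
  KF12 : K₁ * F₂ = ((q:ℂ) ^ (1:ℤ)) • (F₂ * K₁)
  KF21 : K₂ * F₁ = ((q:ℂ) ^ (1:ℤ)) • (F₁ * K₂)
  KF22 : K₂ * F₂ = ((q:ℂ) ^ (-2:ℤ)) • (F₂ * K₂)
  EF11 : E₁ * F₁ - F₁ * E₁ = ((q:ℂ) - (q:ℂ)⁻¹)⁻¹ • (K₁ - K₁')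
  EF22 : E₂ * F₂ - F₂ * E₂ = ((q:ℂ) - (q:ℂ)⁻¹)⁻¹ • (K₂ - K₂')
  EF12 : E₁ * F₂ = F₂ * E₁
  EF21 : E₂ * F₁ = F₁ * E₂
  serreE₁ : E₁ ^ 2 * E₂ - ((q:ℂ) + (q:ℂ)⁻¹) • (E₁ * E₂ * E₁) + E₂ * E₁ ^ 2 = 0
  serreE₂ : E₂ ^ 2 * E₁ - ((q:ℂ) + (q:ℂ)⁻¹) • (E₂ * E₁ * E₂) + E₁ * E₂ ^ 2 = 0
  serreF₁ : F₁ ^ 2 * F₂ - ((q:ℂ) + (q:ℂ)⁻¹) • (F₁ * F₂ * F₁) + F₂ * F₁ ^ 2 = 0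
  serreF₂ : F₂ ^ 2 * F₁ - ((q:ℂ) + (q:ℂ)⁻¹) • (F₂ * F₁ * F₂) + F₁ * F₂ ^ 2 = 0

/-! The `q`-Serre expression `x² u - [2] x u x + u x²` is linear in `u`, so the left-hand side is
`S(B₁, F₂) - c₂ S(B₁, E₁ K₂⁻¹)`. In each of the two terms `B₁` is a sum `x + y` of two
`q`-commuting summands, the first of which satisfies the `q`-Serre relation with `u`. What remains
depends on `u` only through the `q`-commutator `u y - q y u`; by `[Eᵢ, Fᵢ] = (Kᵢ - Kᵢ⁻¹)/(q - q⁻¹)`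
this is a combination of two torus elements, of which one cancels and the other factors out,
leaving a multiple of `N (x + y)` with `N = K₁⁻¹ K₂` in the first term and `K₁ K₂⁻¹` in the second.
The two terms are the same computation, with the summands exchanged and `q` replaced by `q⁻¹`. -/

section QCommute

/-- `k` and `e` commute up to the scalar `c`, that is `k * e = c • (e * k)`. For `k` a torus element
this says that `e` is a weight vector of weight `c`; encoded through `SemiconjBy`. -/
def QCommute {𝕜 R : Type*} [Mul R] [SMul 𝕜 R] (c : 𝕜) (k e : R) : Prop :=
  SemiconjBy k e (c • e)

namespace QCommute

section CommSemiring

variable {𝕜 R : Type*} [CommSemiring 𝕜] [Semiring R] [Algebra 𝕜 R] {c d : 𝕜} {k l e f : R}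

theorem iff_eq : QCommute c k e ↔ k * e = c • (e * k) := by
  rw [QCommute, SemiconjBy, smul_mul_assoc]

theorem mul_eq (h : QCommute c k e) : k * e = c • (e * k) :=
  iff_eq.1 h

theorem one_iff_commute : QCommute (1 : 𝕜) k e ↔ Commute k e := by
  rw [QCommute, one_smul, Commute]

theorem mul_mul_eq (h : QCommute c k e) (z : R) : k * (e * z) = c • (e * (k * z)) := by
  rw [← mul_assoc, h.mul_eq, smul_mul_assoc, mul_assoc]

theorem mul_left (hk : QCommute c k e) (hl : QCommute d l e) : QCommute (c * d) (k * l) e := by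
  rw [mul_comm, QCommute, mul_smul]
  exact (hk.smul_right d).mul_left hl

theorem mul_right (he : QCommute c k e) (hf : QCommute d k f) : QCommute (c * d) k (e * f) := by
  rw [QCommute, ← smul_mul_smul_comm]
  exact SemiconjBy.mul_right he hf

theorem smul_left (h : QCommute c k e) (a : 𝕜) : QCommute c (a • k) e :=
  SemiconjBy.smul_left h a

theorem smul_right (h : QCommute c k e) (a : 𝕜) : QCommute c k (a • e) := by
  rw [QCommute, smul_comm]
  exact SemiconjBy.smul_right h a

end CommSemiring

section Semifield

variable {𝕜 R : Type*} [Semifield 𝕜] [Semiring R] [Algebra 𝕜 R] {c : 𝕜} {e : R}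

theorem symm {k : R} (hc : c ≠ 0) (h : QCommute c k e) : QCommute c⁻¹ e k := by
  rw [iff_eq, h.mul_eq, inv_smul_smul₀ hc]

theorem units_inv_left {k : Rˣ} (hc : c ≠ 0) (h : QCommute c (k : R) e) :
    QCommute c⁻¹ (↑k⁻¹ : R) e := by
  have hinv := (SemiconjBy.units_inv_symm_left h).smul_right c⁻¹
  rwa [inv_smul_smul₀ hc] at hinv

theorem units_zpow_left {k : Rˣ} (hc : c ≠ 0) (h : QCommute c (k : R) e) (n : ℤ) :
    QCommute (c ^ n) (↑(k ^ n) : R) e := by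
  induction n with
  | zero => simp [one_iff_commute]
  | succ n ih =>
    rw [zpow_add_one₀ hc, zpow_add_one, Units.val_mul]
    exact ih.mul_left h
  | pred n ih =>
    rw [zpow_sub_one₀ hc, zpow_sub_one, Units.val_mul]
    exact ih.mul_left (h.units_inv_left hc)

end Semifield

end QCommute

end QCommute

section QSerre

variable {𝕜 R : Type*} [Field 𝕜] [Ring R] [Algebra 𝕜 R]

/-- The quantum Serre expression `x² u - [2]_q x u x + u x²`, whose vanishing is the quantum Serre
relation attached to a Cartan matrix entry `-1`. -/
def qSerre (q : 𝕜) (x u : R) : R :=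
  x ^ 2 * u - (q + q⁻¹) • (x * u * x) + u * x ^ 2

theorem qSerre_inv (q : 𝕜) (x u : R) : qSerre q⁻¹ x u = qSerre q x u := by
  rw [qSerre, qSerre, inv_inv, add_comm q⁻¹]

theorem qSerre_sub_right (q : 𝕜) (x u v : R) :
    qSerre q x (u - v) = qSerre q x u - qSerre q x v := by
  simp only [qSerre, mul_sub, sub_mul, smul_sub]
  abel

theorem qSerre_smul_right (q c : 𝕜) (x u : R) : qSerre q x (c • u) = c • qSerre q x u := by
  simp only [qSerre, mul_smul_comm, smul_mul_assoc]
  module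

theorem qSerre_smul_left (q c : 𝕜) (x u : R) : qSerre q (c • x) u = c ^ 2 • qSerre q x u := by
  simp only [qSerre, smul_pow, mul_smul_comm, smul_mul_assoc]
  module

theorem qSerre_eq_qCommutator {q : 𝕜} (hq : q ≠ 0) (y u : R) :
    qSerre q y u = (u * y - q • (y * u)) * y - q⁻¹ • (y * (u * y - q • (y * u))) := by
  simp only [qSerre, pow_two, mul_sub, sub_mul, mul_smul_comm, smul_mul_assoc, mul_assoc]
  match_scalars <;> field_simp
  ring

theorem qSerre_add_left {q : 𝕜} (hq : q ≠ 0) {x y : R} (hyx : QCommute (q ^ 2) y x) (u : R) :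
    qSerre q (x + y) u = qSerre q x u + qSerre q y u +
      (q + q⁻¹) • (q⁻¹ • ((u * y - q • (y * u)) * x) - x * (u * y - q • (y * u))) := by
  simp only [qSerre, pow_two (_ : R), mul_add, add_mul, mul_sub, sub_mul, mul_smul_comm,
    smul_mul_assoc, mul_assoc, hyx.mul_eq]
  match_scalars <;> field_simp

theorem qSerre_add_eq_smul_mul_add {q : 𝕜} (hq : q ≠ 0) {t : 𝕜} {x y u M N : R}
    (hyx : QCommute (q ^ 2) y x) (hxu : qSerre q x u = 0)
    (huy : u * y - q • (y * u) = t • (N - M))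
    (hMx : QCommute q M x) (hMy : QCommute q⁻¹ M y)
    (hNx : QCommute (q ^ 3) N x) (hNy : QCommute (q ^ 3) N y) :
    qSerre q (x + y) u = (t * (1 - q ^ (-4 : ℤ))) • (N * (x + y)) := by
  rw [qSerre_add_left hq hyx, hxu, qSerre_eq_qCommutator hq, huy]
  simp only [mul_add, mul_sub, sub_mul, mul_smul_comm, smul_mul_assoc,
    hMx.mul_eq, hMy.mul_eq, hNx.mul_eq, hNy.mul_eq]
  match_scalars <;> field_simp <;> ring

theorem qSerre_mul_mul (q : 𝕜) {a b : 𝕜} {x u k l : R} (hkl : Commute k l)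
    (hkx : QCommute a k x) (hku : QCommute b k u) (hlx : QCommute b l x) :
    qSerre q (x * k) (u * l) = (a * b ^ 2) • (qSerre q x u * (k ^ 2 * l)) := by
  simp only [qSerre, pow_two (_ : R), add_mul, sub_mul, mul_smul_comm, smul_mul_assoc, mul_assoc,
    hkx.mul_mul_eq, hku.mul_mul_eq, hlx.mul_mul_eq, hkl.symm.eq, hkl.symm.left_comm]
  module

end QSerre

/-- The defining relations of `U_q(sl₃)` among elements `E i`, `F i` and units `K i` of an algebra
over an arbitrary field, with the two nodes of the Dynkin diagram indexed by `Fin 2`. -/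
structure QuantumSL3 {𝕜 R : Type*} [Field 𝕜] [Ring R] [Algebra 𝕜 R] (q : 𝕜)
    (E F : Fin 2 → R) (K : Fin 2 → Rˣ) : Prop where
  commute_K : ∀ i j, Commute (K i) (K j)
  qCommute_K_E : ∀ i j, QCommute (q ^ CartanMatrix.A 2 i j) (K i : R) (E j)
  qCommute_K_F : ∀ i j, QCommute (q ^ (-CartanMatrix.A 2 i j)) (K i : R) (F j)
  E_mul_F_self : ∀ i, E i * F i - F i * E i = (q - q⁻¹)⁻¹ • ((K i : R) - ↑(K i)⁻¹)
  commute_E_F : ∀ i j, i ≠ j → Commute (E i) (F j)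
  qSerre_E : ∀ i j, i ≠ j → qSerre q (E i) (E j) = 0
  qSerre_F : ∀ i j, i ≠ j → qSerre q (F i) (F j) = 0

/-- The generator `Bᵢ = Fᵢ - c Eⱼ Kᵢ⁻¹` of the coideal subalgebra, where `j` is meant to be the
node other than `i`. -/
def coidealGenerator {𝕜 R : Type*} [SMul 𝕜 R] [Ring R] (E F : Fin 2 → R) (K : Fin 2 → Rˣ)
    (c : 𝕜) (i j : Fin 2) : R :=
  F i - c • (E j * ↑(K i)⁻¹)

namespace QuantumSL3

theorem cartanMatrix_A_two_self (i : Fin 2) : CartanMatrix.A 2 i i = 2 :=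
  congrFun (CartanMatrix.A_diag 2) i

theorem cartanMatrix_A_two_of_ne {i j : Fin 2} (hij : i ≠ j) : CartanMatrix.A 2 i j = -1 := by
  rw [CartanMatrix.A_two]
  fin_cases i <;> fin_cases j <;> simp_all

variable {𝕜 R : Type*} [Field 𝕜] [Ring R] [Algebra 𝕜 R] {q : 𝕜}
  {E F : Fin 2 → R} {K : Fin 2 → Rˣ} {i j : Fin 2}

theorem qCommute_zpow_mul_zpow_E (h : QuantumSL3 q E F K) (hq : q ≠ 0) (hij : i ≠ j) (m n : ℤ) :
    QCommute (q ^ (2 * n - m)) (↑(K i ^ m * K j ^ n) : R) (E j) := by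
  have hKi := (h.qCommute_K_E i j).units_zpow_left (zpow_ne_zero _ hq) m
  have hKj := (h.qCommute_K_E j j).units_zpow_left (zpow_ne_zero _ hq) n
  have hKK := hKi.mul_left hKj
  rw [cartanMatrix_A_two_of_ne hij, cartanMatrix_A_two_self, ← zpow_mul, ← zpow_mul,
    ← zpow_add₀ hq, ← Units.val_mul] at hKK
  convert hKK using 2
  ring

theorem qCommute_zpow_mul_zpow_F (h : QuantumSL3 q E F K) (hq : q ≠ 0) (hij : i ≠ j) (m n : ℤ) :
    QCommute (q ^ (n - 2 * m)) (↑(K i ^ m * K j ^ n) : R) (F i) := by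
  have hKi := (h.qCommute_K_F i i).units_zpow_left (zpow_ne_zero _ hq) m
  have hKj := (h.qCommute_K_F j i).units_zpow_left (zpow_ne_zero _ hq) n
  have hKK := hKi.mul_left hKj
  rw [cartanMatrix_A_two_of_ne hij.symm, cartanMatrix_A_two_self, ← zpow_mul, ← zpow_mul,
    ← zpow_add₀ hq, ← Units.val_mul] at hKK
  convert hKK using 2
  ring

theorem qCommute_zpow_mul_zpow_E_mul_inv (h : QuantumSL3 q E F K) (hq : q ≠ 0) (hij : i ≠ j)
    (m n : ℤ) :
    QCommute (q ^ (2 * n - m)) (↑(K i ^ m * K j ^ n) : R) (E j * ↑(K i)⁻¹) := by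
  have hKK : Commute (K i ^ m * K j ^ n) (K i)⁻¹ :=
    (((h.commute_K i i).zpow_left m).mul_left ((h.commute_K j i).zpow_left n)).inv_right
  have hKE := (h.qCommute_zpow_mul_zpow_E hq hij m n).mul_right
    (QCommute.one_iff_commute.2 hKK.units_val)
  rwa [mul_one] at hKE

theorem qCommute_E_mul_inv_F (h : QuantumSL3 q E F K) (hq : q ≠ 0) (hij : i ≠ j) :
    QCommute (q ^ 2) (E j * ↑(K i)⁻¹) (F i) := by
  have hE : QCommute (1 : 𝕜) (E j) (F i) := QCommute.one_iff_commute.2 (h.commute_E_F j i hij.symm)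
  simpa using hE.mul_left (h.qCommute_zpow_mul_zpow_F hq hij (-1) 0)

theorem F_mul_E_mul_inv_sub_smul (h : QuantumSL3 q E F K) (hq : q ≠ 0) (hij : i ≠ j) :
    F j * (E j * ↑(K i)⁻¹) - q • (E j * ↑(K i)⁻¹ * F j) =
      (q - q⁻¹)⁻¹ • (↑((K i)⁻¹ * (K j)⁻¹) - ↑((K i)⁻¹ * K j) : R) := by
  have hKF : (↑(K i)⁻¹ : R) * F j = q⁻¹ • (F j * ↑(K i)⁻¹) := by
    simpa using (h.qCommute_zpow_mul_zpow_F hq hij.symm 0 (-1)).mul_eq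
  calc F j * (E j * ↑(K i)⁻¹) - q • (E j * ↑(K i)⁻¹ * F j)
      = -(E j * F j - F j * E j) * ↑(K i)⁻¹ := by
        rw [mul_assoc, hKF, mul_smul_comm, smul_inv_smul₀ hq]
        noncomm_ring
    _ = (q - q⁻¹)⁻¹ • (↑((K j)⁻¹ * (K i)⁻¹) - ↑(K j * (K i)⁻¹) : R) := by
        rw [h.E_mul_F_self, Units.val_mul, Units.val_mul, ← sub_mul, ← smul_mul_assoc, ← smul_neg,
          neg_sub]
    _ = _ := by
        rw [(h.commute_K j i).inv_inv.eq, (h.commute_K j i).inv_right.eq]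

theorem E_mul_inv_mul_F_sub_smul (h : QuantumSL3 q E F K) (hq : q ≠ 0) (hij : i ≠ j) :
    E i * ↑(K j)⁻¹ * F i - q⁻¹ • (F i * (E i * ↑(K j)⁻¹)) =
      (q⁻¹ * (q - q⁻¹)⁻¹) • (↑(K i * (K j)⁻¹) - ↑((K i)⁻¹ * (K j)⁻¹) : R) := by
  have hF := h.F_mul_E_mul_inv_sub_smul hq hij.symm
  rw [(h.commute_K j i).inv_inv.eq, (h.commute_K j i).inv_left.eq] at hF
  calc E i * ↑(K j)⁻¹ * F i - q⁻¹ • (F i * (E i * ↑(K j)⁻¹))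
      = -q⁻¹ • (F i * (E i * ↑(K j)⁻¹) - q • (E i * ↑(K j)⁻¹ * F i)) := by
        match_scalars <;> field_simp
    _ = _ := by
        rw [hF]
        module

theorem qSerre_E_mul_inv (h : QuantumSL3 q E F K) (hq : q ≠ 0) (hij : i ≠ j) :
    qSerre q (E j * ↑(K i)⁻¹) (E i * ↑(K j)⁻¹) = 0 := by
  have hKiEj : QCommute q (↑(K i)⁻¹ : R) (E j) := by
    simpa using h.qCommute_zpow_mul_zpow_E hq hij (-1) 0
  have hKiEi : QCommute (q ^ (-2 : ℤ)) (↑(K i)⁻¹ : R) (E i) := by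
    simpa using h.qCommute_zpow_mul_zpow_E hq hij.symm 0 (-1)
  have hKjEj : QCommute (q ^ (-2 : ℤ)) (↑(K j)⁻¹ : R) (E j) := by
    simpa using h.qCommute_zpow_mul_zpow_E hq hij 0 (-1)
  rw [qSerre_mul_mul q (h.commute_K i j).inv_inv.units_val hKiEj hKiEi hKjEj,
    h.qSerre_E j i hij.symm, zero_mul, smul_zero]

theorem qSerre_coidealGenerator_F (h : QuantumSL3 q E F K) (hq : q ≠ 0) (hq2 : q ^ 2 ≠ 1)
    (hij : i ≠ j) (c : 𝕜) :
    qSerre q (coidealGenerator E F K c i j) (F j) =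
      ((q + q⁻¹) * (q ^ (-2 : ℤ) * c)) •
        (↑((K i)⁻¹ * K j) * coidealGenerator E F K c i j) := by
  have hKF := h.qCommute_zpow_mul_zpow_F hq hij
  have hKE (m n : ℤ) := (h.qCommute_zpow_mul_zpow_E_mul_inv hq hij m n).smul_right (-c)
  have hFE : F j * (-c • (E j * ↑(K i)⁻¹)) - q • (-c • (E j * ↑(K i)⁻¹) * F j) =
      (c * (q - q⁻¹)⁻¹) • (↑((K i)⁻¹ * K j) - ↑((K i)⁻¹ * (K j)⁻¹) : R) := by
    rw [mul_smul_comm, smul_mul_assoc, smul_comm q, ← smul_sub, h.F_mul_E_mul_inv_sub_smul hq hij]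
    module
  have hq' : q ^ 2 - 1 ≠ 0 := sub_ne_zero.2 hq2
  have hs : c * (q - q⁻¹)⁻¹ * (1 - q ^ (-4 : ℤ)) = (q + q⁻¹) * (q ^ (-2 : ℤ) * c) := by
    field_simp
    ring
  rw [coidealGenerator, sub_eq_add_neg, ← neg_smul, ← hs]
  exact qSerre_add_eq_smul_mul_add hq ((h.qCommute_E_mul_inv_F hq hij).smul_left _)
    (h.qSerre_F i j hij) hFE (by simpa using hKF (-1) (-1)) (by simpa using hKE (-1) (-1))
    (by simpa using hKF (-1) 1) (by simpa using hKE (-1) 1)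

theorem qSerre_coidealGenerator_E_mul_inv (h : QuantumSL3 q E F K) (hq : q ≠ 0) (hq2 : q ^ 2 ≠ 1)
    (hij : i ≠ j) (c : 𝕜) :
    qSerre q (coidealGenerator E F K c i j) (E i * ↑(K j)⁻¹) =
      -((q + q⁻¹) * q) • (↑(K i * (K j)⁻¹) * coidealGenerator E F K c i j) := by
  have hKF := h.qCommute_zpow_mul_zpow_F hq hij
  have hKE (m n : ℤ) := (h.qCommute_zpow_mul_zpow_E_mul_inv hq hij m n).smul_right (-c)
  have hFE : QCommute (q⁻¹ ^ 2) (F i) (-c • (E j * ↑(K i)⁻¹)) := by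
    rw [inv_pow]
    exact ((h.qCommute_E_mul_inv_F hq hij).symm (pow_ne_zero 2 hq)).smul_right _
  have hSerre : qSerre q⁻¹ (-c • (E j * ↑(K i)⁻¹)) (E i * ↑(K j)⁻¹) = 0 := by
    rw [qSerre_inv, qSerre_smul_left, h.qSerre_E_mul_inv hq hij, smul_zero]
  have hq' : q ^ 2 - 1 ≠ 0 := sub_ne_zero.2 hq2
  have hs : q⁻¹ * (q - q⁻¹)⁻¹ * (1 - q⁻¹ ^ (-4 : ℤ)) = -((q + q⁻¹) * q) := by
    simp only [inv_zpow', neg_neg]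
    field_simp
    ring
  rw [coidealGenerator, sub_eq_neg_add, ← neg_smul, ← hs, ← qSerre_inv]
  exact qSerre_add_eq_smul_mul_add (inv_ne_zero hq) hFE hSerre (h.E_mul_inv_mul_F_sub_smul hq hij)
    (by simpa using hKE (-1) (-1)) (by simpa using hKF (-1) (-1))
    (by simpa using hKE 1 (-1)) (by simpa using hKF 1 (-1))

end QuantumSL3

theorem stmt_general {𝕜 R : Type*} [Field 𝕜] [Ring R] [Algebra 𝕜 R] {q : 𝕜} (hq : q ≠ 0)
    (hq2 : q ^ 2 ≠ 1) {E F : Fin 2 → R} {K : Fin 2 → Rˣ} (h : QuantumSL3 q E F K) {i j : Fin 2}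
    (hij : i ≠ j) (c d : 𝕜) :
    qSerre q (coidealGenerator E F K c i j) (coidealGenerator E F K d j i) =
      (q + q⁻¹) • (((q * d) • (K i * ↑(K j)⁻¹ : R) + (q ^ (-2 : ℤ) * c) • (↑(K i)⁻¹ * K j)) *
        coidealGenerator E F K c i j) := by
  rw [coidealGenerator.eq_def E F K d, qSerre_sub_right, qSerre_smul_right,
    h.qSerre_coidealGenerator_F hq hq2 hij, h.qSerre_coidealGenerator_E_mul_inv hq hq2 hij]
  simp only [Units.val_mul, add_mul, smul_mul_assoc]
  module

theorem UqSL3.quantumSL3 {R : Type*} [Ring R] [Algebra ℂ R] {q : ℝ}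
    {E₁ E₂ F₁ F₂ K₁ K₁' K₂ K₂' : R} (h : UqSL3 R q E₁ E₂ F₁ F₂ K₁ K₁' K₂ K₂') :
    QuantumSL3 (q : ℂ) ![E₁, E₂] ![F₁, F₂]
      ![⟨K₁, K₁', h.K₁mul, h.K₁mul'⟩, ⟨K₂, K₂', h.K₂mul, h.K₂mul'⟩] where
  commute_K := by simp [Fin.forall_fin_two, commute_iff_eq, Units.ext_iff, h.Kcomm]
  qCommute_K_E := by
    simp [Fin.forall_fin_two, CartanMatrix.A_two, QCommute.iff_eq, h.KE11, h.KE12, h.KE21, h.KE22]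
  qCommute_K_F := by
    simp [Fin.forall_fin_two, CartanMatrix.A_two, QCommute.iff_eq, h.KF11, h.KF12, h.KF21, h.KF22]
  E_mul_F_self := by simp [Fin.forall_fin_two, h.EF11, h.EF22]
  commute_E_F := by simp [Fin.forall_fin_two, commute_iff_eq, h.EF12, h.EF21]
  qSerre_E := by simp [Fin.forall_fin_two, qSerre, h.serreE₁, h.serreE₂]
  qSerre_F := by simp [Fin.forall_fin_two, qSerre, h.serreF₁, h.serreF₂]

theorem stmt {R : Type*} [Ring R] [Algebra ℂ R] (q : ℝ) (hq0 : 0 < q) (hq1 : q < 1)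
    (c₁ c₂ : ℂ) (hc₁ : c₁ ≠ 0) (hc₂ : c₂ ≠ 0)
    (E₁ E₂ F₁ F₂ K₁ K₁' K₂ K₂' : R)
    (h : UqSL3 R q E₁ E₂ F₁ F₂ K₁ K₁' K₂ K₂') :
    (F₁ - c₁ • (E₂ * K₁')) ^ 2 * (F₂ - c₂ • (E₁ * K₂'))
      - ((q:ℂ) + (q:ℂ)⁻¹) • ((F₁ - c₁ • (E₂ * K₁')) * (F₂ - c₂ • (E₁ * K₂')) * (F₁ - c₁ • (E₂ * K₁')))
      + (F₂ - c₂ • (E₁ * K₂')) * (F₁ - c₁ • (E₂ * K₁')) ^ 2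
    = ((q:ℂ) + (q:ℂ)⁻¹) •
        ((((q:ℂ) * c₂) • (K₁ * K₂') + (((q:ℂ) ^ (-2:ℤ)) * c₁) • (K₁' * K₂))
          * (F₁ - c₁ • (E₂ * K₁'))) := by
  have hq2 : (q : ℂ) ^ 2 ≠ 1 := mod_cast (pow_lt_one₀ hq0.le hq1 two_ne_zero).ne
  exact stmt_general (mod_cast hq0.ne') hq2 h.quantumSL3 zero_ne_one c₁ c₂
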